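/- arXiv:1110.0688 — 5 statements merged into one kernel-verified Lean document; each statement's English description precedes it below -/
import Mathlib

section
/- For every integer m ≥ 1 there exists a constant C_m > 0 such that for all λ ∈ (0,1] and all p ∈ ℝ with |p| > λ^{-1}, one has ∫_{|p'| ≤ λ^{-1}} (λ^{-1} − |p'|)^m J_λ(p,p') dp' ≤ C_m · ∫_{|p'| ≤ λ^{-1}} J_λ(p,p') dp'. -/
open MeasureTheory Real

/-- Standard Gaussian density. -/
noncomputable def gauss (q : ℝ) : ℝ := (Real.sqrt (2 * Real.pi))⁻¹ * Real.exp (-q ^ 2 / 2)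

/-- The constant η = (1/16)·√(π/2). -/
noncomputable def eta : ℝ := (1 / 16) * Real.sqrt (Real.pi / 2)

/-- Collision jump-rate kernel. -/
noncomputable def Jker (lam p p' : ℝ) : ℝ :=
  (eta * (1 + lam) / 2) * |p' - p| * gauss (((1 - lam) / 2) * p' - ((1 + lam) / 2) * p)

lemma aux_step (A b y R : ℝ) (hA : 1 ≤ A) (hb : 1 / 4 ≤ b) (hy : 0 ≤ y) (hR : 0 ≤ R) (n : ℕ) :
    (∫ t in (0 : ℝ)..R, t ^ (n + 1) * ((t + y) * Real.exp (-(A + b * t) ^ 2 / 2))) ≤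
      (4 * (n + 2)) * ∫ t in (0 : ℝ)..R, t ^ n * ((t + y) * Real.exp (-(A + b * t) ^ 2 / 2)) := by
  have hder : ∀ t : ℝ, HasDerivAt
      (fun t : ℝ => -(t ^ (n + 1) * ((t + y) * Real.exp (-(A + b * t) ^ 2 / 2))))
      (-((n + 1) * t ^ n * ((t + y) * Real.exp (-(A + b * t) ^ 2 / 2))
        + t ^ (n + 1) * (Real.exp (-(A + b * t) ^ 2 / 2)
          + (t + y) * (Real.exp (-(A + b * t) ^ 2 / 2) * (-(b * (A + b * t))))))) t := by
    intro t
    have h1 : HasDerivAt (fun t : ℝ => t ^ (n + 1)) ((n + 1) * t ^ n) t := by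
      simpa using hasDerivAt_pow (n + 1) t
    have h2 : HasDerivAt (fun t : ℝ => t + y) 1 t := (hasDerivAt_id t).add_const y
    have h3 : HasDerivAt (fun t : ℝ => A + b * t) b t := by
      simpa using ((hasDerivAt_id t).const_mul b).const_add A
    have h4 : HasDerivAt (fun t : ℝ => -(A + b * t) ^ 2 / 2) (-(b * (A + b * t))) t := by
      refine ((h3.pow 2).neg.div_const 2).congr_deriv ?_
      push_cast
      ring
    refine ((h1.mul (h2.mul h4.exp)).neg).congr_deriv ?_
    simp only [Pi.mul_apply]
    ring
  have hftc := intervalIntegral.integral_eq_sub_of_hasDerivAt (a := 0) (b := R)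
    (fun t _ => hder t) (Continuous.intervalIntegrable (by fun_prop) _ _)
  have hle : ∫ t in (0 : ℝ)..R, (1 / 4 * (t ^ (n + 1) * ((t + y) * Real.exp (-(A + b * t) ^ 2 / 2)))
      - (n + 2) * (t ^ n * ((t + y) * Real.exp (-(A + b * t) ^ 2 / 2)))) ≤ 0 := by
    calc _ ≤ _ := intervalIntegral.integral_mono_on hR
          (Continuous.intervalIntegrable (by fun_prop) _ _)
          (Continuous.intervalIntegrable (by fun_prop) _ _) (fun t ht => ?_)
      _ = _ := hftc
      _ ≤ 0 := ?_
    · have ht0 : 0 ≤ t := ht.1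
      set E := Real.exp (-(A + b * t) ^ 2 / 2) with hE
      have hE0 : 0 < E := Real.exp_pos _
      have hbA : 1 / 4 ≤ b * (A + b * t) := by
        have : 0 ≤ b * t := mul_nonneg (by linarith) ht0
        nlinarith
      have hX : 0 ≤ t ^ (n + 1) * ((t + y) * E) := by positivity
      have hY : 0 ≤ t ^ n * (y * E) := by positivity
      have hX' := mul_le_mul_of_nonneg_right hbA hX
      have e : t ^ (n + 1) = t ^ n * t := pow_succ t n
      rw [e] at hX' ⊢
      linarith
    · have : 0 ≤ R ^ (n + 1) * ((R + y) * Real.exp (-(A + b * R) ^ 2 / 2)) := by positivity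
      simp
      simpa using this
  rw [intervalIntegral.integral_sub (Continuous.intervalIntegrable (by fun_prop) _ _)
    (Continuous.intervalIntegrable (by fun_prop) _ _), intervalIntegral.integral_const_mul,
    intervalIntegral.integral_const_mul] at hle
  linarith

lemma aux_iter (n : ℕ) : ∃ C : ℝ, 0 < C ∧ ∀ A b y R : ℝ, 1 ≤ A → 1 / 4 ≤ b → 0 ≤ y → 0 ≤ R →
    (∫ t in (0 : ℝ)..R, t ^ n * ((t + y) * Real.exp (-(A + b * t) ^ 2 / 2))) ≤
      C * ∫ t in (0 : ℝ)..R, ((t + y) * Real.exp (-(A + b * t) ^ 2 / 2)) := by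
  induction n with
  | zero => exact ⟨1, one_pos, fun A b y R _ _ _ _ => by simp⟩
  | succ n ih =>
    obtain ⟨C, hC, h⟩ := ih
    refine ⟨4 * (n + 2) * C, by positivity, fun A b y R hA hb hy hR => ?_⟩
    refine (aux_step A b y R hA hb hy hR n).trans ?_
    rw [mul_assoc (4 * ((n : ℝ) + 2))]
    exact mul_le_mul_of_nonneg_left (h A b y R hA hb hy hR) (by positivity)

lemma aux_cont (lam p : ℝ) : Continuous (fun q => Jker lam p q) := by
  unfold Jker gauss
  fun_prop

lemma aux_nonneg (lam p q : ℝ) (h : 0 < lam) : 0 ≤ Jker lam p q := by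
  unfold Jker gauss eta
  positivity

lemma aux_pos (m : ℕ) : ∃ C : ℝ, 0 < C ∧ ∀ lam ∈ Set.Ioc (0 : ℝ) 1, ∀ p : ℝ, lam⁻¹ < p →
    (∫ q in (-lam⁻¹)..lam⁻¹, (lam⁻¹ - |q|) ^ m * Jker lam p q) ≤
          C * ∫ q in (-lam⁻¹)..lam⁻¹, Jker lam p q := by
  obtain ⟨C, hC, h⟩ := aux_iter m
  refine ⟨max C (2 ^ m), by positivity, fun lam hl p hp => ?_⟩
  obtain ⟨h0, h1⟩ := hl
  have hL : 0 < lam⁻¹ := by positivity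
  have hJc := aux_cont lam p
  have hI : 0 ≤ ∫ q in (-lam⁻¹)..lam⁻¹, Jker lam p q :=
    intervalIntegral.integral_nonneg (by linarith) (fun q _ => aux_nonneg _ _ _ h0)
  rcases le_total (1 / 2) lam with hc | hc
  · have hL2 : lam⁻¹ ≤ 2 := by
      rw [inv_le_comm₀ h0 (by norm_num)]; linarith
    refine le_trans ?_ (mul_le_mul_of_nonneg_right (le_max_right _ _) hI)
    rw [← intervalIntegral.integral_const_mul]
    refine intervalIntegral.integral_mono_on (by linarith)
      (Continuous.intervalIntegrable (by fun_prop) _ _)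
      (Continuous.intervalIntegrable (by fun_prop) _ _) (fun q hq => ?_)
    refine mul_le_mul_of_nonneg_right ?_ (aux_nonneg _ _ _ h0)
    have : |q| ≤ lam⁻¹ := abs_le.2 hq
    exact pow_le_pow_left₀ (by linarith) (by linarith [abs_nonneg q]) m
  · refine le_trans ?_ (mul_le_mul_of_nonneg_right (le_max_left _ _) hI)
    set c : ℝ := eta * (1 + lam) / 2 * (Real.sqrt (2 * Real.pi))⁻¹ with hcdef
    have hc0 : 0 ≤ c := by rw [hcdef]; unfold eta; positivity
    set A : ℝ := 1 + (1 + lam) / 2 * (p - lam⁻¹) with hA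
    set b : ℝ := (1 - lam) / 2 with hb
    set y : ℝ := p - lam⁻¹ with hy
    have hy0 : 0 < y := by rw [hy]; linarith
    have hJ : ∀ t : ℝ, 0 ≤ t → Jker lam p (lam⁻¹ - t) =
        c * ((t + y) * Real.exp (-(A + b * t) ^ 2 / 2)) := by
      intro t ht
      unfold Jker gauss
      have e1 : |lam⁻¹ - t - p| = t + y := by
        rw [abs_of_nonpos (by linarith)]; rw [hy]; ring
      have e2 : (1 - lam) / 2 * (lam⁻¹ - t) - (1 + lam) / 2 * p = -(A + b * t) := by
        rw [hA, hb, hy]; field_simp; ring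
      rw [e1, e2, hcdef, neg_sq]; ring
    have key := h A b y (2 * lam⁻¹) (by rw [hA]; nlinarith) (by rw [hb]; linarith) hy0.le
      (by linarith)
    have s1 : ∫ q in (-lam⁻¹)..lam⁻¹, Jker lam p q =
        c * ∫ t in (0 : ℝ)..(2 * lam⁻¹), ((t + y) * Real.exp (-(A + b * t) ^ 2 / 2)) := by
      have := intervalIntegral.integral_comp_sub_left (a := 0) (b := 2 * lam⁻¹)
        (fun q => Jker lam p q) lam⁻¹
      rw [show lam⁻¹ - 2 * lam⁻¹ = -lam⁻¹ by ring, sub_zero] at this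
      rw [← this, ← intervalIntegral.integral_const_mul]
      refine intervalIntegral.integral_congr (fun t ht => ?_)
      rw [Set.uIcc_of_le (by linarith)] at ht
      exact hJ t ht.1
    have s2 : ∫ q in (-lam⁻¹)..lam⁻¹, (lam⁻¹ - q) ^ m * Jker lam p q =
        c * ∫ t in (0 : ℝ)..(2 * lam⁻¹),
          t ^ m * ((t + y) * Real.exp (-(A + b * t) ^ 2 / 2)) := by
      have := intervalIntegral.integral_comp_sub_left (a := 0) (b := 2 * lam⁻¹)
        (fun q => (lam⁻¹ - q) ^ m * Jker lam p q) lam⁻¹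
      rw [show lam⁻¹ - 2 * lam⁻¹ = -lam⁻¹ by ring, sub_zero] at this
      rw [← this, ← intervalIntegral.integral_const_mul]
      refine intervalIntegral.integral_congr (fun t ht => ?_)
      rw [Set.uIcc_of_le (by linarith)] at ht
      simp only [hJ t ht.1, sub_sub_cancel]
      ring
    calc _ ≤ ∫ q in (-lam⁻¹)..lam⁻¹, (lam⁻¹ - q) ^ m * Jker lam p q := by
          refine intervalIntegral.integral_mono_on (by linarith)
            (Continuous.intervalIntegrable (by fun_prop) _ _)
            (Continuous.intervalIntegrable (by fun_prop) _ _) (fun q hq => ?_)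
          refine mul_le_mul_of_nonneg_right ?_ (aux_nonneg _ _ _ h0)
          have : |q| ≤ lam⁻¹ := abs_le.2 hq
          exact pow_le_pow_left₀ (by linarith) (by linarith [le_abs_self q]) m
      _ ≤ _ := by
          rw [s1, s2]
          have := mul_le_mul_of_nonneg_left key hc0
          linarith

lemma aux_neg (lam p q : ℝ) : Jker lam p (-q) = Jker lam (-p) q := by
  unfold Jker gauss
  rw [show -q - p = -(q - -p) by ring, abs_neg,
    show (1 - lam) / 2 * -q - (1 + lam) / 2 * p = -((1 - lam) / 2 * q - (1 + lam) / 2 * -p) by ring,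
    neg_sq]

theorem stmt_8 :
    ∀ m : ℕ, 1 ≤ m → ∃ C : ℝ, 0 < C ∧ ∀ lam ∈ Set.Ioc (0 : ℝ) 1, ∀ p : ℝ,
      lam⁻¹ < |p| →
        (∫ p' in {p' : ℝ | |p'| ≤ lam⁻¹}, (lam⁻¹ - |p'|) ^ m * Jker lam p p') ≤
          C * ∫ p' in {p' : ℝ | |p'| ≤ lam⁻¹}, Jker lam p p' := by
  intro m _
  obtain ⟨C, hC, h⟩ := aux_pos m
  refine ⟨C, hC, fun lam hl p hp => ?_⟩
  have hL : 0 < lam⁻¹ := inv_pos.2 hl.1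
  have hs : {p' : ℝ | |p'| ≤ lam⁻¹} = Set.Icc (-lam⁻¹) lam⁻¹ := by
    ext q
    simp [abs_le]
  rw [hs, integral_Icc_eq_integral_Ioc, integral_Icc_eq_integral_Ioc,
    ← intervalIntegral.integral_of_le (by linarith),
    ← intervalIntegral.integral_of_le (by linarith)]
  rcases lt_abs.1 hp with hp | hp
  · exact h lam hl p hp
  · have key := h lam hl (-p) hp
    have s1 := intervalIntegral.integral_comp_neg (a := -lam⁻¹) (b := lam⁻¹)
      (fun q => Jker lam p q)
    have s2 := intervalIntegral.integral_comp_neg (a := -lam⁻¹) (b := lam⁻¹)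
      (fun q => (lam⁻¹ - |q|) ^ m * Jker lam p q)
    simp only [aux_neg, abs_neg, neg_neg] at s1 s2
    rw [← s1, ← s2]
    exact key
end

section
/- For every integer n ≥ 1 there exist a constant C_n > 0 and λ₀ ∈ (0,1] such that for all λ ∈ (0,λ₀) and all (x,p) ∈ ℝ², K_{λ,n}(x,p) ≤ C_n·(1 + λ|p|)^{n+1}. -/
open MeasureTheory Real

/-- Escape rate. -/
noncomputable def Esc (lam p : ℝ) : ℝ := ∫ p' : ℝ, Jker lam p p'

/-- The Hamiltonian H(x,p) = p²/2 + V(x). -/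
noncomputable def Ham (V : ℝ → ℝ) (x p : ℝ) : ℝ := p ^ 2 / 2 + V x

/-- A_λ(x,p): expected jump of √2·H^{1/2} under the kernel. -/
noncomputable def Afun (V : ℝ → ℝ) (lam x p : ℝ) : ℝ :=
  ∫ p' : ℝ,
    (Real.sqrt 2 * Real.sqrt (Ham V x p') - Real.sqrt 2 * Real.sqrt (Ham V x p)) *
      Jker lam p p'

/-- K_{λ,n}(x,p). -/
noncomputable def Kfun (V : ℝ → ℝ) (lam : ℝ) (n : ℕ) (x p : ℝ) : ℝ :=
  ∫ p' : ℝ, |Real.sqrt (Ham V x p') - Real.sqrt (Ham V x p)| ^ n * Jker lam p p'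

lemma sqrt_lip (a b v : ℝ) (hv : 0 ≤ v) :
    |Real.sqrt (a ^ 2 / 2 + v) - Real.sqrt (b ^ 2 / 2 + v)| ≤ |a - b| := by
  set s := Real.sqrt (a ^ 2 / 2 + v)
  set t := Real.sqrt (b ^ 2 / 2 + v)
  have hs0 : 0 ≤ s := Real.sqrt_nonneg _
  have ht0 : 0 ≤ t := Real.sqrt_nonneg _
  have hs : s ^ 2 = a ^ 2 / 2 + v := Real.sq_sqrt (by positivity)
  have ht : t ^ 2 = b ^ 2 / 2 + v := Real.sq_sqrt (by positivity)
  apply sq_le_sq.mp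
  have h1 : (a * b / 2 + v) ≤ s * t := by
    apply abs_le_of_sq_le_sq' _ (mul_nonneg hs0 ht0) |>.2
    rw [mul_pow, hs, ht]
    nlinarith [mul_nonneg hv (sq_nonneg (a - b))]
  nlinarith [sq_nonneg (a - b)]

lemma gauss_bd (m : ℕ) (q : ℝ) :
    (1 + |q|) ^ m * Real.exp (-q ^ 2 / 2) ≤
      Real.exp ((m : ℝ) ^ 2) * Real.exp (-(1 / 4) * q ^ 2) := by
  have h1 : (1 + |q|) ^ m ≤ Real.exp (m * |q|) := by
    rw [Real.exp_nat_mul]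
    apply pow_le_pow_left₀ (by positivity)
    linarith [Real.add_one_le_exp |q|]
  calc _ ≤ Real.exp (m * |q|) * Real.exp (-q ^ 2 / 2) := by gcongr
    _ ≤ _ := by
      rw [← Real.exp_add, ← Real.exp_add, Real.exp_le_exp]
      nlinarith [sq_nonneg ((m : ℝ) - |q| / 2), sq_abs q]

theorem stmt_9 (V : ℝ → ℝ) (hV : ContDiff ℝ 1 V) (hVpos : ∀ x, 0 ≤ V x)
    (hVper : Function.Periodic V 1) :
    ∀ n : ℕ, 1 ≤ n → ∃ C : ℝ, 0 < C ∧ ∃ lam₀ ∈ Set.Ioc (0 : ℝ) 1,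
      ∀ lam : ℝ, 0 < lam → lam < lam₀ → ∀ x p : ℝ,
        Kfun V lam n x p ≤ C * (1 + lam * |p|) ^ (n + 1) := by
  intro n _
  set M : ℝ := ∫ q : ℝ, Real.exp (-(1 / 4) * q ^ 2) with hM
  have hM0 : 0 ≤ M := integral_nonneg fun q => (Real.exp_pos _).le
  set s : ℝ := (Real.sqrt (2 * Real.pi))⁻¹ with hs
  have hs0 : 0 ≤ s := by positivity
  have heta : 0 ≤ eta := by unfold eta; positivity
  set D : ℝ := eta * 4 ^ (n + 1) * s * Real.exp (((n + 1 : ℕ) : ℝ) ^ 2) with hD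
  have hD0 : 0 ≤ D := by positivity
  refine ⟨D * (4 * M) + 1, by positivity, 1 / 2, by norm_num, ?_⟩
  intro lam hl0 hl1 x p
  set L := 1 + lam * |p| with hL
  have hL1 : 1 ≤ L := by
    have : 0 ≤ lam * |p| := by positivity
    linarith
  set a := (1 - lam) / 2 with ha
  set b := ((1 + lam) / 2) * p with hb
  have ha4 : 1 / 4 < a := by rw [ha]; linarith
  have hint0 : Integrable (fun q : ℝ => Real.exp (-(1 / 4) * q ^ 2)) :=
    integrable_exp_neg_mul_sq (by norm_num)
  have hint : Integrable (fun p' : ℝ => Real.exp (-(1 / 4) * (a * p' - b) ^ 2)) :=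
    (hint0.comp_sub_right b).comp_mul_left' (by linarith)
  have hval : ∫ p' : ℝ, Real.exp (-(1 / 4) * (a * p' - b) ^ 2) = |a⁻¹| * M := by
    have h := Measure.integral_comp_mul_left
      (fun y : ℝ => Real.exp (-(1 / 4) * (y - b) ^ 2)) a
    rw [h, integral_sub_right_eq_self (fun y : ℝ => Real.exp (-(1 / 4) * y ^ 2)) b, smul_eq_mul]
  have hle : Kfun V lam n x p ≤
      ∫ p' : ℝ, D * L ^ (n + 1) * Real.exp (-(1 / 4) * (a * p' - b) ^ 2) := by
    unfold Kfun
    apply integral_mono_of_nonneg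
    · refine Filter.Eventually.of_forall fun p' => ?_
      simp only [Jker, gauss, Pi.zero_apply]
      positivity
    · exact hint.const_mul _
    · refine Filter.Eventually.of_forall fun p' => ?_
      simp only [Jker, gauss, Ham]
      rw [← ha, ← hb, ← hs]
      set q := a * p' - b with hq
      have hpp : |p' - p| ≤ 4 * ((1 + |q|) * L) := by
        have e : a * (p' - p) = q + lam * p := by rw [hq, hb, ha]; ring
        have e2 : a * |p' - p| ≤ |q| + lam * |p| := by
          calc a * |p' - p| = |a * (p' - p)| := by rw [abs_mul, abs_of_pos (by linarith : 0 < a)]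
            _ = |q + lam * p| := by rw [e]
            _ ≤ |q| + |lam * p| := abs_add_le _ _
            _ = _ := by rw [abs_mul, abs_of_pos hl0]
        have e3 : 1 / 4 * |p' - p| ≤ a * |p' - p| := by gcongr
        have e4 : 0 ≤ |q| * (lam * |p|) := by positivity
        rw [hL]
        nlinarith
      have hj : |Real.sqrt (p' ^ 2 / 2 + V x) - Real.sqrt (p ^ 2 / 2 + V x)| ≤ |p' - p| :=
        sqrt_lip _ _ _ (hVpos x)
      have hg := gauss_bd (n + 1) q
      have hc : eta * (1 + lam) / 2 ≤ eta := by nlinarith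
      calc _ ≤ |p' - p| ^ n * (eta * |p' - p| * (s * Real.exp (-q ^ 2 / 2))) := by gcongr
        _ = |p' - p| ^ (n + 1) * (eta * (s * Real.exp (-q ^ 2 / 2))) := by ring
        _ ≤ (4 * ((1 + |q|) * L)) ^ (n + 1) * (eta * (s * Real.exp (-q ^ 2 / 2))) := by gcongr
        _ = (eta * 4 ^ (n + 1) * s * L ^ (n + 1)) *
            ((1 + |q|) ^ (n + 1) * Real.exp (-q ^ 2 / 2)) := by rw [mul_pow, mul_pow]; ring
        _ ≤ (eta * 4 ^ (n + 1) * s * L ^ (n + 1)) *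
            (Real.exp (((n + 1 : ℕ) : ℝ) ^ 2) * Real.exp (-(1 / 4) * q ^ 2)) := by gcongr
        _ = _ := by rw [hD]; ring
  rw [integral_const_mul, hval] at hle
  have hai : |a⁻¹| ≤ 4 := by
    rw [abs_of_pos (by positivity), inv_le_comm₀ (by linarith) (by norm_num)]
    linarith
  calc _ ≤ _ := hle
    _ ≤ D * L ^ (n + 1) * (4 * M) := by gcongr
    _ ≤ (D * (4 * M) + 1) * L ^ (n + 1) := by
      have : 0 ≤ L ^ (n + 1) := by positivity
      nlinarith
end

section
/- For every integer n ≥ 1 there exist a constant C_n > 0 and λ₀ ∈ (0,1] such that for all λ ∈ (0,λ₀) and all (x,p) ∈ ℝ², V_{λ,n}(x,p) ≤ C_n·(1 + λ|p|). -/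
open MeasureTheory Real

/-- V_{λ,n}(x,p): the 2n-th centered jump moment of √2·H^{1/2}. -/
noncomputable def Vfun (V : ℝ → ℝ) (lam : ℝ) (n : ℕ) (x p : ℝ) : ℝ :=
  ∫ p' : ℝ,
    (Real.sqrt 2 * Real.sqrt (Ham V x p') - Real.sqrt 2 * Real.sqrt (Ham V x p) -
        Afun V lam x p / Esc lam p) ^ (2 * n) * Jker lam p p'


lemma gauss_pos' (q : ℝ) : 0 < gauss q := by
  unfold gauss; positivity

lemma gauss_neg' (q : ℝ) : gauss (-q) = gauss q := by
  unfold gauss; simp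

lemma gauss_cont : Continuous gauss := by
  unfold gauss; fun_prop

lemma eta_pos : 0 < eta := by
  unfold eta; positivity

lemma int_pow (k : ℕ) : Integrable (fun q : ℝ => |q| ^ k * gauss q) := by
  have h := integrable_rpow_mul_exp_neg_mul_sq (b := 1/2) (by norm_num) (s := (k : ℝ))
    (by have : (0:ℝ) ≤ k := Nat.cast_nonneg k
        linarith)
  have h2 := (h.norm).const_mul ((Real.sqrt (2 * Real.pi))⁻¹)
  refine h2.congr (Filter.Eventually.of_forall fun q => ?_)
  simp only [gauss, Real.rpow_natCast, norm_mul, norm_pow, Real.norm_eq_abs, Real.abs_exp]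
  rw [show -(1/2:ℝ) * q ^ 2 = -q ^ 2 / 2 by ring]
  ring

lemma int_poly (K : ℝ) (N : ℕ) : ∀ k : ℕ,
    Integrable (fun q : ℝ => (4 * |q| + K) ^ N * (|q| ^ k * gauss q)) := by
  induction N with
  | zero => intro k; simpa using int_pow k
  | succ N ih =>
    intro k
    refine (((ih (k+1)).const_mul 4).add ((ih k).const_mul K)).congr
      (Filter.Eventually.of_forall fun q => ?_)
    simp only [Pi.add_apply]
    ring

lemma int_dom (f : ℝ → ℝ) (hf : Continuous f) (hb : ∀ q, |f q| ≤ 4 * |q|) (y : ℝ) :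
    Integrable (fun q : ℝ => f q * (|q + y| * gauss q)) := by
  refine Integrable.mono' (((int_pow 2).const_mul 4).add ((int_pow 1).const_mul (4 * |y|)))
    (by have := gauss_cont; fun_prop) (Filter.Eventually.of_forall fun q => ?_)
  have hg := gauss_pos' q
  simp only [Pi.add_apply, Real.norm_eq_abs, abs_mul, abs_abs, abs_of_pos hg]
  calc |f q| * (|q + y| * gauss q) ≤ (4 * |q|) * ((|q| + |y|) * gauss q) := by
        gcongr
        · exact hb q
        · exact abs_add_le q y
    _ = _ := by ring

lemma int_wt (y : ℝ) : Integrable (fun q : ℝ => |q + y| * gauss q) := by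
  refine Integrable.mono' ((int_pow 1).add ((int_pow 0).const_mul |y|))
    (by have := gauss_cont; fun_prop) (Filter.Eventually.of_forall fun q => ?_)
  have hg := gauss_pos' q
  simp only [Pi.add_apply, Real.norm_eq_abs, abs_mul, abs_abs, abs_of_pos hg]
  calc |q + y| * gauss q ≤ (|q| + |y|) * gauss q := by
        gcongr
        exact abs_add_le q y
    _ = _ := by ring

lemma wt_symm (y : ℝ) : 2 * ∫ q : ℝ, |q + y| * gauss q =
    ∫ q : ℝ, (|q + y| * gauss q + |q - y| * gauss q) := by
  have h1 : ∫ q : ℝ, |q - y| * gauss q = ∫ q : ℝ, |q + y| * gauss q := by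
    rw [← integral_neg_eq_self (fun q : ℝ => |q - y| * gauss q)]
    congr 1; ext q
    rw [gauss_neg', ← abs_neg]; congr 2; ring
  rw [integral_add (int_wt y) (by simpa [sub_eq_add_neg] using int_wt (-y)), h1]
  ring

lemma wt_lb1 (y : ℝ) : ∫ q : ℝ, |q| ^ 1 * gauss q ≤ ∫ q : ℝ, |q + y| * gauss q := by
  have h := wt_symm y
  have : ∫ q : ℝ, 2 * (|q| ^ 1 * gauss q) ≤
      ∫ q : ℝ, (|q + y| * gauss q + |q - y| * gauss q) := by
    refine integral_mono ((int_pow 1).const_mul 2)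
      ((int_wt y).add (by simpa [sub_eq_add_neg] using int_wt (-y))) fun q => ?_
    have hg := gauss_pos' q
    have h3 : 2 * |q| ≤ |q + y| + |q - y| := by
      have := abs_add_le (q + y) (q - y)
      rw [show q + y + (q - y) = 2 * q by ring, abs_mul] at this
      simpa using this
    simp only [pow_one]
    nlinarith
  rw [integral_const_mul] at this
  linarith

lemma wt_lb0 (y : ℝ) : |y| * ∫ q : ℝ, |q| ^ 0 * gauss q ≤ ∫ q : ℝ, |q + y| * gauss q := by
  have h := wt_symm y
  have : ∫ q : ℝ, (2 * |y|) * (|q| ^ 0 * gauss q) ≤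
      ∫ q : ℝ, (|q + y| * gauss q + |q - y| * gauss q) := by
    refine integral_mono ((int_pow 0).const_mul _)
      ((int_wt y).add (by simpa [sub_eq_add_neg] using int_wt (-y))) fun q => ?_
    have hg := gauss_pos' q
    have h3 : 2 * |y| ≤ |q + y| + |q - y| := by
      have := abs_sub (q + y) (q - y)
      rw [show q + y - (q - y) = 2 * y by ring, abs_mul] at this
      simpa using this
    simp only [pow_zero]
    nlinarith
  rw [integral_const_mul] at this
  linarith

lemma mom_pos (k : ℕ) : 0 < ∫ q : ℝ, |q| ^ k * gauss q := by
  have hc : Continuous (fun q : ℝ => |q| ^ k * gauss q) := by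
    have := gauss_cont; fun_prop
  refine integral_pos_of_integrable_nonneg_nonzero (x := 1) hc (int_pow k) ?_ ?_
  · intro q
    have := gauss_pos' q
    simp only [Pi.zero_apply]
    positivity
  · have := gauss_pos' 1
    simp only [abs_one, one_pow, one_mul]
    exact this.ne'

lemma cov (lam p : ℝ) (h0 : 0 < lam) (h1 : lam < 1) (f : ℝ → ℝ) :
    ∫ p' : ℝ, f p' * Jker lam p p' =
      ((2 / (1 - lam)) ^ 2 * (eta * (1 + lam) / 2)) *
        ∫ q : ℝ, f (2 / (1 - lam) * q + (1 + lam) / (1 - lam) * p) *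
          (|q + lam * p| * gauss q) := by
  have hl : 0 < 1 - lam := by linarith
  have hm : 0 < 2 / (1 - lam) := by positivity
  set m := 2 / (1 - lam) with hmdef
  set b := (1 + lam) / (1 - lam) * p with hb
  rw [← integral_add_right_eq_self (fun p' => f p' * Jker lam p p') b]
  have h2 := Measure.integral_comp_mul_left (fun x => f (x + b) * Jker lam p (x + b)) m
  rw [abs_of_pos (inv_pos.mpr hm), smul_eq_mul] at h2
  have h3 : ∫ x : ℝ, f (x + b) * Jker lam p (x + b) =
      m * ∫ x : ℝ, f (m * x + b) * Jker lam p (m * x + b) := by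
    rw [h2]; field_simp
  rw [h3, ← integral_const_mul, ← integral_const_mul]
  congr 1; ext q
  unfold Jker
  have e1 : m * q + b - p = m * (q + lam * p) := by
    rw [hb, hmdef]; field_simp; ring
  have e2 : (1 - lam) / 2 * (m * q + b) - (1 + lam) / 2 * p = q := by
    rw [hb, hmdef]; field_simp; ring
  rw [e1, e2, abs_mul, abs_of_pos hm]
  ring

lemma F_lip (v : ℝ) (hv : 0 ≤ v) (a b : ℝ) :
    |Real.sqrt 2 * Real.sqrt (a ^ 2 / 2 + v) - Real.sqrt 2 * Real.sqrt (b ^ 2 / 2 + v)|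
      ≤ |a - b| := by
  rw [← Real.sqrt_mul (by norm_num), ← Real.sqrt_mul (by norm_num)]
  have key : ∀ a b : ℝ, √(2 * (a ^ 2 / 2 + v)) ≤ √(2 * (b ^ 2 / 2 + v)) + |a - b| := by
    intro a b
    apply Real.sqrt_le_iff.mpr
    refine ⟨by positivity, ?_⟩
    have hs := Real.sq_sqrt (show 0 ≤ 2 * (b ^ 2 / 2 + v) by positivity)
    have hb : |b| ≤ √(2 * (b ^ 2 / 2 + v)) := by
      apply Real.le_sqrt_of_sq_le
      rw [sq_abs]; linarith
    have h1 : (a - b) * b ≤ |a - b| * √(2 * (b ^ 2 / 2 + v)) := by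
      calc (a - b) * b ≤ |(a - b) * b| := le_abs_self _
        _ = |a - b| * |b| := abs_mul _ _
        _ ≤ _ := by gcongr
    have h2 := sq_abs (a - b)
    nlinarith
  rw [abs_le]
  have h1 := key a b
  have h2 := key b a
  rw [abs_sub_comm b a] at h2
  constructor <;> linarith

set_option maxHeartbeats 2000000 in
theorem stmt_11 (V : ℝ → ℝ) (hV : ContDiff ℝ 1 V) (hVpos : ∀ x, 0 ≤ V x)
    (hVper : Function.Periodic V 1) :
    ∀ n : ℕ, 1 ≤ n → ∃ C : ℝ, 0 < C ∧ ∃ lam₀ ∈ Set.Ioc (0 : ℝ) 1,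
      ∀ lam : ℝ, 0 < lam → lam < lam₀ → ∀ x p : ℝ,
        Vfun V lam n x p ≤ C * (1 + lam * |p|) := by
  intro n _
  obtain ⟨m0, hm0⟩ : ∃ t, t = ∫ q : ℝ, |q| ^ 0 * gauss q := ⟨_, rfl⟩
  obtain ⟨m1, hm1⟩ : ∃ t, t = ∫ q : ℝ, |q| ^ 1 * gauss q := ⟨_, rfl⟩
  obtain ⟨m2, hm2⟩ : ∃ t, t = ∫ q : ℝ, |q| ^ 2 * gauss q := ⟨_, rfl⟩
  have p0 : 0 < m0 := hm0 ▸ mom_pos 0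
  have p1 : 0 < m1 := hm1 ▸ mom_pos 1
  have p2 : 0 < m2 := hm2 ▸ mom_pos 2
  obtain ⟨K, hK⟩ : ∃ t, t = 4 * (m2 / m1 + m1 / m0) := ⟨_, rfl⟩
  have pK : 0 < K := by rw [hK]; positivity
  obtain ⟨I0, hI0⟩ : ∃ t, t = ∫ q : ℝ, (4 * |q| + K) ^ (2 * n) * (|q| ^ 0 * gauss q) := ⟨_, rfl⟩
  obtain ⟨I1, hI1⟩ : ∃ t, t = ∫ q : ℝ, (4 * |q| + K) ^ (2 * n) * (|q| ^ 1 * gauss q) := ⟨_, rfl⟩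
  have pI0 : 0 ≤ I0 := by
    rw [hI0]; exact integral_nonneg fun q => by have := gauss_pos' q; positivity
  have pI1 : 0 ≤ I1 := by
    rw [hI1]; exact integral_nonneg fun q => by have := gauss_pos' q; positivity
  have he := eta_pos
  refine ⟨12 * eta * (I0 + I1) + 1, by positivity, 1 / 2, by norm_num, ?_⟩
  intro lam hl0 hl1 x p
  have hl : 0 < 1 - lam := by linarith
  obtain ⟨m, hm⟩ : ∃ t, t = 2 / (1 - lam) := ⟨_, rfl⟩
  have pm : 0 < m := by rw [hm]; positivity
  have m4 : m ≤ 4 := by rw [hm, div_le_iff₀ hl]; linarith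
  obtain ⟨b, hb⟩ : ∃ t, t = (1 + lam) / (1 - lam) * p := ⟨_, rfl⟩
  obtain ⟨y, hy⟩ : ∃ t, t = lam * p := ⟨_, rfl⟩
  obtain ⟨κ, hκ⟩ : ∃ t, t = m ^ 2 * (eta * (1 + lam) / 2) := ⟨_, rfl⟩
  have pκ : 0 < κ := by rw [hκ]; positivity
  have κ12 : κ ≤ 12 * eta := by
    rw [hκ]
    calc m ^ 2 * (eta * (1 + lam) / 2) ≤ 4 ^ 2 * (eta * (1 + 1 / 2) / 2) := by gcongr
      _ = 12 * eta := by ring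
  have hcov : ∀ f : ℝ → ℝ, ∫ p' : ℝ, f p' * Jker lam p p' =
      κ * ∫ q : ℝ, f (m * q + b) * (|q + y| * gauss q) := by
    intro f
    rw [cov lam p hl0 (by linarith) f, hκ, hm, hb, hy]
  obtain ⟨F, hF⟩ : ∃ F : ℝ → ℝ, F = fun r => Real.sqrt 2 * Real.sqrt (Ham V x r) := ⟨_, rfl⟩
  have hFc : Continuous F := by rw [hF]; unfold Ham; fun_prop
  have hFl : ∀ r s, |F r - F s| ≤ |r - s| := by
    intro r s
    rw [hF]
    exact F_lip (V x) (hVpos x) r s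
  obtain ⟨D, hD⟩ : ∃ D : ℝ → ℝ, D = fun q => F (m * q + b) - F b := ⟨_, rfl⟩
  have hDc : Continuous D := by rw [hD]; fun_prop
  have hDb : ∀ q, |D q| ≤ 4 * |q| := by
    intro q
    rw [hD]
    calc |F (m * q + b) - F b| ≤ |m * q + b - b| := hFl _ _
      _ = m * |q| := by rw [add_sub_cancel_right, abs_mul, abs_of_pos pm]
      _ ≤ 4 * |q| := by gcongr
  obtain ⟨e, hE⟩ : ∃ t, t = ∫ q : ℝ, |q + y| * gauss q := ⟨_, rfl⟩
  have le1 : m1 ≤ e := by rw [hm1, hE]; exact wt_lb1 y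
  have le0 : |y| * m0 ≤ e := by rw [hm0, hE]; exact wt_lb0 y
  have pe : 0 < e := by linarith
  have hEsc : Esc lam p = κ * e := by
    have := hcov (fun _ => 1)
    simp only [one_mul] at this
    rw [Esc, this, hE]
  obtain ⟨d, hd⟩ : ∃ t, t = ∫ q : ℝ, D q * (|q + y| * gauss q) := ⟨_, rfl⟩
  have hA : Afun V lam x p = κ * (d + (F b - F p) * e) := by
    have := hcov (fun r => F r - F p)
    have h2 : Afun V lam x p = ∫ p' : ℝ, (F p' - F p) * Jker lam p p' := by
      rw [hF]; rfl
    rw [h2, this, hd, hE, ← integral_const_mul (F b - F p),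
      ← integral_add (int_dom D hDc hDb y) ((int_wt y).const_mul _)]
    congr 2; ext q
    rw [hD]; ring
  have hdb : |d| ≤ K * e := by
    have h1 : |d| ≤ 4 * m2 + 4 * |y| * m1 := by
      rw [hd, hm2, hm1, ← integral_const_mul, ← integral_const_mul,
        ← integral_add ((int_pow 2).const_mul _) ((int_pow 1).const_mul _)]
      rw [← Real.norm_eq_abs]
      refine norm_integral_le_of_norm_le (((int_pow 2).const_mul _).add ((int_pow 1).const_mul _))
        (Filter.Eventually.of_forall fun q => ?_)
      have hg := gauss_pos' q
      simp only [Real.norm_eq_abs, abs_mul, abs_abs, abs_of_pos hg]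
      calc |D q| * (|q + y| * gauss q) ≤ (4 * |q|) * ((|q| + |y|) * gauss q) := by
            gcongr
            · exact hDb q
            · exact abs_add_le q y
        _ = _ := by ring
    have h2 : m2 ≤ m2 / m1 * e := by
      calc m2 = m2 / m1 * m1 := by field_simp
        _ ≤ _ := by gcongr
    have h3 : |y| * m1 ≤ m1 / m0 * e := by
      calc |y| * m1 = m1 / m0 * (|y| * m0) := by field_simp
        _ ≤ _ := by gcongr
    rw [hK]; linarith
  have hAE : Afun V lam x p / Esc lam p = d / e + (F b - F p) := by
    rw [hA, hEsc]; field_simp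
  have hde : |d / e| ≤ K := by
    rw [abs_div, abs_of_pos pe, div_le_iff₀ pe]; exact hdb
  have hVf : Vfun V lam n x p =
      κ * ∫ q : ℝ, (D q - d / e) ^ (2 * n) * (|q + y| * gauss q) := by
    have := hcov (fun r => (F r - F p - Afun V lam x p / Esc lam p) ^ (2 * n))
    have h2 : Vfun V lam n x p = ∫ p' : ℝ,
      (F p' - F p - Afun V lam x p / Esc lam p) ^ (2 * n) * Jker lam p p' := by
      rw [hF]; rfl
    rw [h2, this]
    congr 2; ext q
    rw [hAE, hD]
    congr 2; ring
  have hint : ∫ q : ℝ, (D q - d / e) ^ (2 * n) * (|q + y| * gauss q) ≤ I1 + |y| * I0 := by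
    rw [hI1, hI0, ← integral_const_mul,
      ← integral_add (int_poly K (2 * n) 1) ((int_poly K (2 * n) 0).const_mul _)]
    refine integral_mono_of_nonneg (Filter.Eventually.of_forall fun q => ?_)
      ((int_poly K (2 * n) 1).add ((int_poly K (2 * n) 0).const_mul _))
      (Filter.Eventually.of_forall fun q => ?_)
    · have hg := gauss_pos' q
      have := (even_two_mul n).pow_nonneg (D q - d / e)
      simp only [Pi.zero_apply]
      positivity
    · have hg := gauss_pos' q
      have h1 : |D q - d / e| ≤ 4 * |q| + K :=
        (abs_sub _ _).trans (add_le_add (hDb q) hde)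
      have h2 : (D q - d / e) ^ (2 * n) ≤ (4 * |q| + K) ^ (2 * n) := by
        rw [← (even_two_mul n).pow_abs]
        gcongr
      calc (D q - d / e) ^ (2 * n) * (|q + y| * gauss q)
          ≤ (4 * |q| + K) ^ (2 * n) * ((|q| + |y|) * gauss q) := by
            gcongr
            exact abs_add_le q y
        _ = _ := by ring
  have hay : |y| = lam * |p| := by rw [hy, abs_mul, abs_of_pos hl0]
  rw [hVf, ← hay]
  have hy0 := abs_nonneg y
  calc _ ≤ κ * (I1 + |y| * I0) := by gcongr
    _ ≤ 12 * eta * (I1 + |y| * I0) := by gcongr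
    _ ≤ 12 * eta * ((I0 + I1) * (1 + |y|)) := by
        gcongr
        nlinarith [mul_nonneg hy0 pI1]
    _ ≤ _ := by nlinarith
end

section
/- There exist a constant C > 0 and λ₀ ∈ (0,1] such that for all λ ∈ (0,λ₀) and all (x,p) ∈ ℝ², A_λ^−(x,p) ≤ |D_λ(p)|; in particular, for all p with |p| ≤ λ^{−1} one has A_λ^−(x,p) ≤ C·λ|p|. -/
open MeasureTheory Real

/-- Drift rate. -/
noncomputable def Drift (lam p : ℝ) : ℝ := ∫ p' : ℝ, (p' - p) * Jker lam p p'


lemma gauss_nonneg (v : ℝ) : 0 ≤ gauss v := by unfold gauss; positivity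

lemma int_g0 : Integrable gauss := by
  have h := (integrable_exp_neg_mul_sq (b := 1/2) (by norm_num)).const_mul (Real.sqrt (2 * Real.pi))⁻¹
  refine h.congr (Filter.Eventually.of_forall fun v => ?_)
  simp only [gauss]; ring_nf

lemma int_g1 : Integrable (fun v => v * gauss v) := by
  have h := (integrable_mul_exp_neg_mul_sq (b := 1/2) (by norm_num)).const_mul (Real.sqrt (2 * Real.pi))⁻¹
  refine h.congr (Filter.Eventually.of_forall fun v => ?_)
  simp only [gauss]; ring_nf

lemma int_g2 : Integrable (fun v => v ^ 2 * gauss v) := by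
  have h := (integrable_rpow_mul_exp_neg_mul_sq (b := 1/2) (by norm_num) (s := 2)
    (by norm_num)).const_mul (Real.sqrt (2 * Real.pi))⁻¹
  refine h.congr (Filter.Eventually.of_forall fun v => ?_)
  simp only [gauss, Real.rpow_two]; ring_nf

lemma int_gabs : Integrable (fun v => |v| * gauss v) := by
  refine int_g1.norm.congr (Filter.Eventually.of_forall fun v => ?_)
  simp [abs_mul, abs_of_nonneg (gauss_nonneg v)]

lemma int_h (a : ℝ) : Integrable (fun v => (v + a) * |v + a| * gauss v) := by
  have h : Integrable (fun v => v ^ 2 * gauss v + (2 * a) * (v * gauss v) + a ^ 2 * gauss v) :=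
    (int_g2.add (int_g1.const_mul (2 * a))).add (int_g0.const_mul (a ^ 2))
  refine h.mono' ?_ (Filter.Eventually.of_forall fun v => ?_)
  · have := gauss_cont
    exact Continuous.aestronglyMeasurable (by fun_prop)
  · rw [Real.norm_eq_abs, abs_mul, abs_mul, abs_abs, abs_mul_abs_self,
      abs_of_nonneg (gauss_nonneg v)]
    apply le_of_eq; ring

lemma int_h0 : ∫ v, (v * |v| * gauss v) = 0 := by
  have h := integral_neg_eq_self (fun v : ℝ => v * |v| * gauss v) volume
  have h2 : (fun v : ℝ => (-v) * |(-v)| * gauss (-v)) = fun v => -(v * |v| * gauss v) := by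
    funext v; simp only [gauss, abs_neg, neg_sq]; ring
  rw [h2, integral_neg] at h
  linarith

lemma sq_abs_diff (v a : ℝ) (ha : |a| ≤ 1) :
    abs ((v + a) * |v + a| - v * |v|) ≤ |a| * (2 * |v| + 1) := by
  have h1 : (v + a) * |v + a| - v * |v| = (v + a) * (|v + a| - |v|) + a * |v| := by ring
  have h2 : abs (|v + a| - |v|) ≤ |a| := by
    have := abs_abs_sub_abs_le (v + a) v
    simpa using this
  have h3 := abs_add_le v a
  rw [h1]
  refine (abs_add_le _ _).trans ?_
  rw [abs_mul, abs_mul, abs_abs]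
  have := mul_le_mul (h3.trans (add_le_add_right ha _)) h2 (abs_nonneg _) (by positivity)
  nlinarith

noncomputable def MM : ℝ := ∫ v, (2 * |v| + 1) * gauss v

lemma MM_nonneg : 0 ≤ MM :=
  integral_nonneg fun v => mul_nonneg (by positivity) (gauss_nonneg v)

lemma int_M : Integrable (fun v => (2 * |v| + 1) * gauss v) := by
  refine ((int_gabs.const_mul 2).add int_g0).congr (Filter.Eventually.of_forall fun v => ?_)
  simp only [Pi.add_apply]; ring

lemma h_bound (a : ℝ) (ha : |a| ≤ 1) : |∫ v, (v + a) * |v + a| * gauss v| ≤ |a| * MM := by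
  have h0 : Integrable (fun v => v * |v| * gauss v) := by simpa using int_h 0
  have e : ∫ v, (v + a) * |v + a| * gauss v
      = ∫ v, ((v + a) * |v + a| * gauss v - v * |v| * gauss v) := by
    rw [integral_sub (int_h a) h0, int_h0, sub_zero]
  rw [e, MM, ← integral_const_mul, ← Real.norm_eq_abs]
  refine norm_integral_le_of_norm_le (int_M.const_mul _) (Filter.Eventually.of_forall fun v => ?_)
  rw [← sub_mul, Real.norm_eq_abs, abs_mul, abs_of_nonneg (gauss_nonneg v), ← mul_assoc]
  exact mul_le_mul_of_nonneg_right (sq_abs_diff v a ha) (gauss_nonneg v)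

lemma drift_eq (lam p : ℝ) (h1 : lam < 1) (q : ℝ) :
    (q - p) * Jker lam p q = (eta * (1 + lam) / 2 * (((1 - lam) / 2)⁻¹) ^ 2) *
      (fun v => (v + lam * p) * |v + lam * p| * gauss v)
        ((((1 - lam) / 2)) * q - ((1 + lam) / 2) * p) := by
  have hc : 0 < (1 - lam) / 2 := by linarith
  have e : (1 - lam) / 2 * q - (1 + lam) / 2 * p + lam * p = (1 - lam) / 2 * (q - p) := by ring
  simp only [Jker]
  rw [e, abs_mul, abs_of_pos hc]
  generalize gauss _ = g
  generalize |q - p| = w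
  generalize (1 - lam) / 2 = c at *
  field_simp

lemma drift_int (lam p : ℝ) (h1 : lam < 1) : Integrable (fun q => (q - p) * Jker lam p q) := by
  have hc : (1 - lam) / 2 ≠ 0 := by linarith
  simp_rw [drift_eq lam p h1]
  apply Integrable.const_mul
  exact ((int_h (lam * p)).comp_sub_right ((1 + lam) / 2 * p)).comp_mul_left' hc

lemma drift_val (lam p : ℝ) (h1 : lam < 1) :
    Drift lam p = (eta * (1 + lam) / 2 * (((1 - lam) / 2)⁻¹) ^ 2) *
      (|((1 - lam) / 2)⁻¹| * ∫ v, (v + lam * p) * |v + lam * p| * gauss v) := by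
  unfold Drift
  simp_rw [drift_eq lam p h1]
  rw [integral_const_mul]
  congr 1
  rw [Measure.integral_comp_mul_left (fun y => (fun v => (v + lam * p) * |v + lam * p| * gauss v)
    (y - (1 + lam) / 2 * p)), integral_sub_right_eq_self
    (fun v => (v + lam * p) * |v + lam * p| * gauss v), smul_eq_mul]

lemma Jker_nonneg (lam p q : ℝ) (h0 : 0 < lam) : 0 ≤ Jker lam p q := by
  have := gauss_nonneg (((1 - lam) / 2) * q - ((1 + lam) / 2) * p)
  unfold Jker eta
  positivity

lemma drift_bd (lam p : ℝ) (h0 : 0 < lam) (h1 : lam < 1 / 2) (hp : |p| ≤ lam⁻¹) :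
    |Drift lam p| ≤ (64 * eta * MM + 1) * lam * |p| := by
  have he : 0 ≤ eta := by unfold eta; positivity
  have ha : |lam * p| ≤ 1 := by
    rw [abs_mul, abs_of_pos h0]
    calc lam * |p| ≤ lam * lam⁻¹ := by gcongr
      _ = 1 := mul_inv_cancel₀ h0.ne'
  have hb := h_bound _ ha
  have hc : 0 < (1 - lam) / 2 := by linarith
  have hci : ((1 - lam) / 2)⁻¹ ≤ 4 := by
    rw [inv_le_comm₀ hc (by norm_num)]; linarith
  have hcp : 0 ≤ ((1 - lam) / 2)⁻¹ := by positivity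
  rw [drift_val lam p (by linarith), abs_of_nonneg hcp, abs_mul, abs_mul _ (integral _ _),
    abs_of_nonneg hcp, abs_of_nonneg (by positivity : 0 ≤ eta * (1 + lam) / 2 * ((1 - lam) / 2)⁻¹ ^ 2)]
  have hM := MM_nonneg
  calc _ ≤ (eta * 4 ^ 2) * (4 * (|lam * p| * MM)) := by
        have : eta * (1 + lam) / 2 ≤ eta := by nlinarith
        gcongr
    _ = 64 * eta * MM * lam * |p| := by rw [abs_mul, abs_of_pos h0]; ring
    _ ≤ _ := by nlinarith [mul_nonneg h0.le (abs_nonneg p)]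

noncomputable def FF (V : ℝ → ℝ) (x p : ℝ) : ℝ := Real.sqrt 2 * Real.sqrt (Ham V x p)

lemma FF_eq (V : ℝ → ℝ) (x p : ℝ) : FF V x p = Real.sqrt (p ^ 2 + 2 * V x) := by
  unfold FF Ham
  rw [← Real.sqrt_mul (by norm_num)]; congr 1; ring

lemma FF_sub (V : ℝ → ℝ) (hV : ∀ x, 0 ≤ V x) (x p q : ℝ) :
    p / FF V x p * (q - p) ≤ FF V x q - FF V x p := by
  rw [FF_eq, FF_eq]
  have hw := hV x
  generalize V x = w at *
  have sp := Real.sq_sqrt (by positivity : 0 ≤ p ^ 2 + 2 * w)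
  have sq := Real.sq_sqrt (by positivity : 0 ≤ q ^ 2 + 2 * w)
  have np := Real.sqrt_nonneg (p ^ 2 + 2 * w)
  have nq := Real.sqrt_nonneg (q ^ 2 + 2 * w)
  generalize √(p ^ 2 + 2 * w) = s at *
  generalize √(q ^ 2 + 2 * w) = t at *
  rcases np.eq_or_lt with h | h
  · subst h; simpa using nq
  · rw [div_mul_eq_mul_div, div_le_iff₀ h]
    have : p * q + 2 * w ≤ t * s := by
      refine (abs_le_of_sq_le_sq' (b := t * s) ?_ (by positivity)).2
      rw [mul_pow, sp, sq]
      nlinarith [mul_nonneg hw (sq_nonneg (p - q))]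
    nlinarith

lemma FF_slope (V : ℝ → ℝ) (hV : ∀ x, 0 ≤ V x) (x p : ℝ) : |p / FF V x p| ≤ 1 := by
  rw [FF_eq, abs_div, abs_of_nonneg (Real.sqrt_nonneg _)]
  apply div_le_one_of_le₀ _ (Real.sqrt_nonneg _)
  apply Real.abs_le_sqrt
  linarith [hV x]

lemma FF_lip (V : ℝ → ℝ) (hV : ∀ x, 0 ≤ V x) (x p q : ℝ) :
    |FF V x q - FF V x p| ≤ |q - p| := by
  have key : ∀ p q : ℝ, -|q - p| ≤ FF V x q - FF V x p := fun p q => by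
    refine le_trans ?_ (FF_sub V hV x p q)
    refine le_trans ?_ (neg_abs_le _)
    rw [abs_mul]
    nlinarith [FF_slope V hV x p, abs_nonneg (q - p)]
  rw [abs_le]
  have h := key q p
  rw [abs_sub_comm] at h
  exact ⟨key p q, by linarith⟩

lemma FF_int (V : ℝ → ℝ) (hV : ∀ x, 0 ≤ V x) (lam x p : ℝ) (h1 : lam < 1) :
    Integrable (fun q => (FF V x q - FF V x p) * Jker lam p q) := by
  refine (drift_int lam p h1).mono ?_ (Filter.Eventually.of_forall fun q => ?_)
  · apply Continuous.aestronglyMeasurable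
    have := gauss_cont
    unfold FF Ham Jker
    fun_prop
  · rw [norm_mul, norm_mul]
    exact mul_le_mul_of_nonneg_right (FF_lip V hV x p q) (norm_nonneg _)

lemma A_bound (V : ℝ → ℝ) (hV : ∀ x, 0 ≤ V x) (lam x p : ℝ) (h0 : 0 < lam) (h1 : lam < 1) :
    max (-(Afun V lam x p)) 0 ≤ |Drift lam p| := by
  refine max_le ?_ (abs_nonneg _)
  have h : p / FF V x p * Drift lam p ≤ Afun V lam x p := by
    unfold Drift
    rw [← integral_const_mul]
    refine integral_mono ((drift_int lam p h1).const_mul _) (FF_int V hV lam x p h1) fun q => ?_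
    simp only
    rw [← mul_assoc]
    exact mul_le_mul_of_nonneg_right (FF_sub V hV x p q) (Jker_nonneg lam p q h0)
  have h2 := neg_abs_le (p / FF V x p * Drift lam p)
  rw [abs_mul] at h2
  nlinarith [FF_slope V hV x p, abs_nonneg (Drift lam p)]

theorem stmt_15 (V : ℝ → ℝ) (hV : ContDiff ℝ 1 V) (hVpos : ∀ x, 0 ≤ V x)
    (hVper : Function.Periodic V 1) :
    ∃ C : ℝ, 0 < C ∧ ∃ lam₀ ∈ Set.Ioc (0 : ℝ) 1,
      ∀ lam : ℝ, 0 < lam → lam < lam₀ → ∀ x p : ℝ,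
        max (-(Afun V lam x p)) 0 ≤ |Drift lam p| ∧
        (|p| ≤ lam⁻¹ → max (-(Afun V lam x p)) 0 ≤ C * lam * |p|) := by
  have he : 0 ≤ eta := by unfold eta; positivity
  have hM := MM_nonneg
  refine ⟨64 * eta * MM + 1, by positivity, 1 / 2, by norm_num, fun lam h0 h1 x p => ?_⟩
  have hA := A_bound V hVpos lam x p h0 (by linarith)
  exact ⟨hA, fun hp => hA.trans (drift_bd lam p h0 h1 hp)⟩
end

section
/- Let (X_t, P_t), t ≥ 0, be a solution of the Hamiltonian equations X'_t = P_t, P'_t = −V'(X_t), and assume P_0² > 4·sup_x V(x). Then: (1) for all t ≥ 0, |P_t − P_0| ≤ 2·(sup_x V(x))/|P_0|; and (2) for all t ≥ 0, |P_t − P_0 − (V(X_0) − V(X_t))/P_0| ≤ 2t·(sup_x |V'(x)|)·(sup_x V(x))/P_0². -/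
open Real

theorem stmt_19 (V : ℝ → ℝ) (hV : ContDiff ℝ 1 V) (hVpos : ∀ x, 0 ≤ V x)
    (hVbdd : BddAbove (Set.range V))
    (hV'bdd : BddAbove (Set.range fun x => |deriv V x|))
    (X P : ℝ → ℝ)
    (hX : ∀ t : ℝ, 0 ≤ t → HasDerivAt X (P t) t)
    (hP : ∀ t : ℝ, 0 ≤ t → HasDerivAt P (-(deriv V (X t))) t)
    (hP0 : (P 0) ^ 2 > 4 * sSup (Set.range V)) :
    (∀ t : ℝ, 0 ≤ t → |P t - P 0| ≤ 2 * sSup (Set.range V) / |P 0|) ∧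
    (∀ t : ℝ, 0 ≤ t →
      |P t - P 0 - (V (X 0) - V (X t)) / P 0| ≤
        2 * t * sSup (Set.range fun x => |deriv V x|) * sSup (Set.range V) / (P 0) ^ 2) := by
  set M := sSup (Set.range V) with hM
  set D := sSup (Set.range fun x => |deriv V x|) with hD
  have hVM : ∀ x, V x ≤ M := fun x => le_csSup hVbdd ⟨x, rfl⟩
  have hVD : ∀ x, |deriv V x| ≤ D := fun x => le_csSup hV'bdd ⟨x, rfl⟩
  have hM0 : 0 ≤ M := (hVpos 0).trans (hVM 0)
  have hD0 : 0 ≤ D := (abs_nonneg _).trans (hVD 0)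
  have hsq : 0 < P 0 ^ 2 := by linarith
  have hne : P 0 ≠ 0 := by
    intro h
    simp [h] at hsq
  have habs : 0 < |P 0| := abs_pos.mpr hne
  have hVX : ∀ t : ℝ, 0 ≤ t → HasDerivAt (fun s => V (X s)) (deriv V (X t) * P t) t := by
    intro t ht
    have h1 : HasDerivAt V (deriv V (X t)) (X t) :=
      (hV.differentiable (by norm_num) (X t)).hasDerivAt
    exact h1.comp t (hX t ht)
  have hE : ∀ t : ℝ, 0 ≤ t → P t ^ 2 - P 0 ^ 2 = 2 * (V (X 0) - V (X t)) := by
    intro t ht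
    have h := (convex_Ici (0 : ℝ)).norm_image_sub_le_of_norm_hasDerivWithin_le
      (f := fun s => P s ^ 2 + 2 * V (X s)) (f' := fun _ => 0) (C := 0) (x := 0) (y := t)
      (fun s hs => by
        have h2 := ((hP s hs).pow 2).add ((hVX s hs).const_mul 2)
        refine (h2.congr_deriv ?_).hasDerivWithinAt
        norm_num
        ring) (fun s _ => by simp) Set.self_mem_Ici ht
    have h3 := norm_le_zero_iff.mp (h.trans_eq (zero_mul _))
    linarith
  have hpos : ∀ t : ℝ, 0 ≤ t → 0 < P 0 * P t := by
    intro t ht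
    by_contra hcon
    push Not at hcon
    have hc : ContinuousOn (fun s => P 0 * P s) (Set.Icc 0 t) := fun s hs =>
      ((hP s hs.1).continuousAt.const_mul (P 0)).continuousWithinAt
    obtain ⟨s, hs, hs0⟩ := intermediate_value_Icc' ht hc
      (show (0 : ℝ) ∈ Set.Icc (P 0 * P t) (P 0 * P 0) from ⟨hcon, by nlinarith⟩)
    have h0 : P s = 0 := (mul_eq_zero.mp hs0).resolve_left hne
    have h1 := hE s hs.1
    rw [h0] at h1
    have := hVM (X s)
    have := hVpos (X 0)
    nlinarith
  have h1 : ∀ t : ℝ, 0 ≤ t → |P t - P 0| ≤ 2 * M / |P 0| := by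
    intro t ht
    rw [le_div_iff₀ habs]
    have ha : |P 0| ≤ |P t + P 0| := by
      apply sq_le_sq.mp
      nlinarith [hpos t ht, sq_nonneg (P t)]
    calc |P t - P 0| * |P 0| ≤ |P t - P 0| * |P t + P 0| := by gcongr
      _ = |2 * (V (X 0) - V (X t))| := by
        rw [← abs_mul, ← hE t ht]
        congr 1
        ring
      _ ≤ 2 * M := by
        rw [abs_le]
        constructor <;> linarith [hVM (X 0), hVM (X t), hVpos (X 0), hVpos (X t)]
  refine ⟨h1, ?_⟩
  intro t ht
  have h := (convex_Ici (0 : ℝ)).norm_image_sub_le_of_norm_hasDerivWithin_le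
    (f := fun s => P s - P 0 - (V (X 0) - V (X s)) / P 0)
    (f' := fun s => deriv V (X s) * (P s - P 0) / P 0)
    (C := D * (2 * M / |P 0|) / |P 0|) (x := 0) (y := t)
    (fun s hs => by
      have h2 := ((hP s hs).sub_const (P 0)).sub
        (((hVX s hs).const_sub (V (X 0))).div_const (P 0))
      refine (h2.congr_deriv ?_).hasDerivWithinAt
      field_simp
      ring)
    (fun s hs => by
      rw [Real.norm_eq_abs, abs_div, abs_mul]
      have := h1 s hs
      have := hVD (X s)
      gcongr) Set.self_mem_Ici ht
  simp only [sub_self, zero_div, sub_zero, Real.norm_eq_abs, abs_of_nonneg ht] at h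
  refine h.trans_eq ?_
  rw [← sq_abs (P 0)]
  field_simp
end
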